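/- arXiv:2001.07181 — 2 statements merged into one kernel-verified Lean document; each statement's English description precedes it below -/
import Mathlib

section
/- Let A ∈ ℝ^{m×n} with m ≤ n and A ≠ 0, with largest and smallest singular values σ₁ and σ_m. Let t be a positive integer and let δ ∈ (0,1) be a restricted isometry constant of order t for A. Suppose ε > σ₁² and λ ∈ ℝ satisfies 0 ≤ λ ≤ ε + σ_m². Then for all u, v ∈ ℝ^n with |supp(u) ∪ supp(v)| ≤ t, one has |⟨u, (I − λ(AᵀA + εI)^{−1}AᵀA)v⟩| ≤ (δ + σ₁² − λσ₁²/(ε + σ₁²))‖u‖₂‖v‖₂. -/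
/-!
Write `G = AᵀA`, `M = 1 - λ (G + ε)⁻¹ G`. Diagonalising `G = U diag(d) Uᵀ` gives
`M = U diag(1 - λ d/(d + ε)) Uᵀ`, so `M` is symmetric and `x ⬝ Mx` splits as
`(‖x‖² - ‖Ax‖²) + ∑ g(dᵢ) yᵢ²` with `y = Uᵀx` and `g(s) = s - λ s/(s + ε)`.

* The first summand is at most `δ ‖x‖²` in absolute value when `x` has at most `t` nonzero entries.
* Every eigenvalue `dᵢ` is either `0` or lies in `[σₘ², σ₁²]` (`eigenvalue_bounds`). There, the
  condition `λ ≤ ε + σₘ²` makes `g` nonnegative and nondecreasing, so `0 ≤ g(dᵢ) ≤ g(σ₁²)`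
  (`shifted_bounds`).

Hence `|x ⬝ Mx| ≤ (δ + g(σ₁²)) ‖x‖²` for all `x` supported in `supp u ∪ supp v`, and polarization
(`polarization_bound`) turns this into the bound on `u ⬝ Mv`.
-/

open Matrix Filter Topology

/-- Euclidean (ℓ₂) norm of a vector in ℝ^n. -/
noncomputable def norm2 {n : ℕ} (x : Fin n → ℝ) : ℝ := Real.sqrt (∑ i, x i ^ 2)

/-- Euclidean inner product. -/
def dot {n : ℕ} (u v : Fin n → ℝ) : ℝ := ∑ i, u i * v i

/-- Support of a vector. -/
def supp {n : ℕ} (x : Fin n → ℝ) : Set (Fin n) := {i | x i ≠ 0}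

/-- δ ∈ (0,1) is a restricted isometry constant of order q for A. -/
def IsRIC {m n : ℕ} (A : Matrix (Fin m) (Fin n) ℝ) (q : ℕ) (δ : ℝ) : Prop :=
  0 < δ ∧ δ < 1 ∧
    ∀ x : Fin n → ℝ, (supp x).ncard ≤ q →
      (1 - δ) * norm2 x ^ 2 ≤ norm2 (A.mulVec x) ^ 2 ∧
      norm2 (A.mulVec x) ^ 2 ≤ (1 + δ) * norm2 x ^ 2

/-- σ is the largest singular value (spectral norm) of A: it bounds ‖Av‖₂/‖v‖₂
and this bound is attained. -/
def IsMaxSingularValue {m n : ℕ} (A : Matrix (Fin m) (Fin n) ℝ) (σ : ℝ) : Prop :=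
  0 ≤ σ ∧ (∀ v : Fin n → ℝ, norm2 (A.mulVec v) ≤ σ * norm2 v) ∧
    ∃ v : Fin n → ℝ, v ≠ 0 ∧ norm2 (A.mulVec v) = σ * norm2 v

/-- For m ≤ n, σ is the smallest singular value of A, i.e. σ² is the smallest
eigenvalue of A Aᵀ: σ is the infimum of ‖Aᵀu‖₂/‖u‖₂ and it is attained. -/
def IsMinSingularValue {m n : ℕ} (A : Matrix (Fin m) (Fin n) ℝ) (σ : ℝ) : Prop :=
  0 ≤ σ ∧ (∀ u : Fin m → ℝ, σ * norm2 u ≤ norm2 (Aᵀ.mulVec u)) ∧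
    ∃ u : Fin m → ℝ, u ≠ 0 ∧ norm2 (Aᵀ.mulVec u) = σ * norm2 u

/-- w is a hard k-thresholding of z with associated index set S*. -/
def IsHardThresholding {n : ℕ} (k : ℕ) (z w : Fin n → ℝ) (S : Set (Fin n)) : Prop :=
  S.ncard = k ∧ (∀ i ∈ S, w i = z i) ∧ (∀ i ∉ S, w i = 0) ∧
    ∀ i ∈ S, ∀ j ∉ S, |z j| ≤ |z i|

lemma norm2_sq {n : ℕ} (x : Fin n → ℝ) : norm2 x ^ 2 = x ⬝ᵥ x := by
  unfold norm2
  rw [Real.sq_sqrt (Finset.sum_nonneg fun i _ => sq_nonneg _)]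
  simp [dotProduct, sq]

lemma norm2_nonneg {n : ℕ} (x : Fin n → ℝ) : 0 ≤ norm2 x := Real.sqrt_nonneg _

lemma eq_zero_of_norm2 {n : ℕ} {x : Fin n → ℝ} (h : norm2 x = 0) : x = 0 := by
  have h2 := norm2_sq x
  rw [h] at h2
  exact dotProduct_self_eq_zero.mp (by simpa using h2.symm)

lemma norm2_sq_mulVec {m n : ℕ} (A : Matrix (Fin m) (Fin n) ℝ) (x : Fin n → ℝ) :
    norm2 (A *ᵥ x) ^ 2 = x ⬝ᵥ ((Aᵀ * A) *ᵥ x) := by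
  rw [norm2_sq, ← mulVec_mulVec, mulVec_transpose, dotProduct_comm x, ← dotProduct_mulVec]

/-- A bound on the quadratic form of a symmetric matrix along the plane spanned by `u` and `v`
bounds the bilinear form at `(u, v)`. -/
lemma polarization_bound {n : ℕ} (M : Matrix (Fin n) (Fin n) ℝ) (hM : Mᵀ = M) (c : ℝ)
    (u v : Fin n → ℝ)
    (h : ∀ a b : ℝ, |(a • u + b • v) ⬝ᵥ (M *ᵥ (a • u + b • v))| ≤ c * norm2 (a • u + b • v) ^ 2) :
    |u ⬝ᵥ (M *ᵥ v)| ≤ c * norm2 u * norm2 v := by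
  have hs : v ⬝ᵥ (M *ᵥ u) = u ⬝ᵥ (M *ᵥ v) := by
    rw [dotProduct_comm u, dotProduct_mulVec, ← mulVec_transpose, hM]
  have hc : v ⬝ᵥ u = u ⬝ᵥ v := dotProduct_comm _ _
  have key : ∀ a b : ℝ, 4 * (a * b) * (u ⬝ᵥ (M *ᵥ v))
      ≤ 2 * c * (a ^ 2 * norm2 u ^ 2 + b ^ 2 * norm2 v ^ 2) := by
    intro a b
    have h1 := (abs_le.mp (h a b)).2
    have h2 := (abs_le.mp (h a (-b))).1
    simp only [norm2_sq, mulVec_add, mulVec_smul, dotProduct_add, add_dotProduct, smul_dotProduct,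
      dotProduct_smul, smul_eq_mul, hs, hc] at h1 h2 ⊢
    linarith
  rcases (norm2_nonneg u).eq_or_lt with hu | hu
  · rw [← hu, eq_zero_of_norm2 hu.symm]; simp
  rcases (norm2_nonneg v).eq_or_lt with hv | hv
  · rw [← hv, eq_zero_of_norm2 hv.symm]; simp
  have hN : 0 < 4 * (norm2 u * norm2 v) := by positivity
  -- Scaling by `a = ‖v‖`, `b = ±‖u‖` gives both vectors the same length.
  have k1 := key (norm2 v) (norm2 u)
  have k2 := key (norm2 v) (-norm2 u)
  rw [abs_le]
  constructor
  · refine le_of_mul_le_mul_left ?_ hN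
    linarith
  · refine le_of_mul_le_mul_left ?_ hN
    linarith

/-- The nonzero eigenvalues of `AᵀA` are eigenvalues of `AAᵀ`, hence at least `σₘ²`. -/
lemma eigenvalue_bounds {m n : ℕ} (A : Matrix (Fin m) (Fin n) ℝ) {σ1 σm : ℝ}
    (hσ1 : IsMaxSingularValue A σ1) (hσm : IsMinSingularValue A σm) {d : ℝ} {w : Fin n → ℝ}
    (hw : w ≠ 0) (hd : (Aᵀ * A) *ᵥ w = d • w) :
    0 ≤ d ∧ d ≤ σ1 ^ 2 ∧ (d = 0 ∨ σm ^ 2 ≤ d) := by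
  have hwpos : 0 < norm2 w ^ 2 := by
    have : norm2 w ≠ 0 := fun h => hw (eq_zero_of_norm2 h)
    positivity
  have hAw : norm2 (A *ᵥ w) ^ 2 = d * norm2 w ^ 2 := by
    rw [norm2_sq_mulVec, hd, dotProduct_smul, smul_eq_mul, norm2_sq]
  have h0 : 0 ≤ d := by
    by_contra hneg
    push Not at hneg
    nlinarith [sq_nonneg (norm2 (A *ᵥ w))]
  refine ⟨h0, ?_, ?_⟩
  · have h1 := pow_le_pow_left₀ (norm2_nonneg _) (hσ1.2.1 w) 2
    rw [hAw, mul_pow] at h1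
    exact le_of_mul_le_mul_right h1 hwpos
  · rcases h0.eq_or_lt with h | h
    · exact Or.inl h.symm
    · right
      have h1 := pow_le_pow_left₀ (mul_nonneg hσm.1 (norm2_nonneg _)) (hσm.2.1 (A *ᵥ w)) 2
      rw [mulVec_mulVec, hd, mul_pow, hAw, norm2_sq (d • w), smul_dotProduct, dotProduct_smul,
        ← norm2_sq, smul_eq_mul, smul_eq_mul] at h1
      have hp : 0 < d * norm2 w ^ 2 := by positivity
      refine le_of_mul_le_mul_right ?_ hp
      linarith

lemma shifted_bounds {ε lam a b d : ℝ} (hε : 0 < ε) (hlam : lam ≤ ε + a)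
    (hd0 : 0 ≤ d) (hdb : d ≤ b) (hab : a ≤ b) (hd : d = 0 ∨ a ≤ d) :
    0 ≤ d - lam * (d / (d + ε)) ∧ d - lam * (d / (d + ε)) ≤ b - lam * b / (ε + b) := by
  have hde : 0 < d + ε := by linarith
  have hbe : 0 < ε + b := by linarith
  constructor
  · have : d - lam * (d / (d + ε)) = d * (d + ε - lam) / (d + ε) := by field_simp
    rw [this]
    rcases hd with rfl | hd
    · simp
    · exact div_nonneg (mul_nonneg hd0 (by linarith)) hde.le
  · have : b - lam * b / (ε + b) - (d - lam * (d / (d + ε)))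
        = (b - d) * ((ε + b) * (d + ε) - lam * ε) / ((ε + b) * (d + ε)) := by
      field_simp
      ring
    have h2 : 0 ≤ (ε + b) * (d + ε) - lam * ε := by
      nlinarith [mul_nonneg (by linarith : 0 ≤ ε + b) hd0,
        mul_le_mul_of_nonneg_right (by linarith : lam ≤ ε + b) hε.le]
    have h3 : 0 ≤ (b - d) * ((ε + b) * (d + ε) - lam * ε) / ((ε + b) * (d + ε)) :=
      div_nonneg (mul_nonneg (by linarith) h2) (by positivity)
    linarith

lemma dotProduct_conj_diagonal {n : ℕ} (U : Matrix (Fin n) (Fin n) ℝ) (f : Fin n → ℝ)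
    (x : Fin n → ℝ) :
    x ⬝ᵥ ((U * diagonal f * Uᵀ) *ᵥ x) = ∑ i, f i * (Uᵀ *ᵥ x) i ^ 2 := by
  rw [← mulVec_mulVec, ← mulVec_mulVec, dotProduct_mulVec, ← mulVec_transpose]
  simp only [dotProduct, mulVec_diagonal]
  exact Finset.sum_congr rfl fun i _ => by ring

lemma exists_diagonalization {n : ℕ} (G : Matrix (Fin n) (Fin n) ℝ) (hG : G.IsHermitian) :
    ∃ (U : Matrix (Fin n) (Fin n) ℝ) (d : Fin n → ℝ), U * Uᵀ = 1 ∧ Uᵀ * U = 1 ∧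
      G = U * diagonal d * Uᵀ ∧ ∀ i, ∃ w : Fin n → ℝ, w ≠ 0 ∧ G *ᵥ w = d i • w := by
  have h1 : (hG.eigenvectorUnitary : Matrix (Fin n) (Fin n) ℝ) *
      (hG.eigenvectorUnitary : Matrix (Fin n) (Fin n) ℝ)ᵀ = 1 := by
    have := Unitary.mul_star_self_of_mem hG.eigenvectorUnitary.2
    rwa [star_eq_conjTranspose, conjTranspose_eq_transpose_of_trivial] at this
  refine ⟨hG.eigenvectorUnitary, hG.eigenvalues, h1, mul_eq_one_comm.mp h1, ?_, ?_⟩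
  · have := hG.spectral_theorem
    rw [Unitary.conjStarAlgAut_apply] at this
    simpa [star_eq_conjTranspose, conjTranspose_eq_transpose_of_trivial, Function.comp_def]
      using this
  · intro i
    refine ⟨_, ?_, hG.mulVec_eigenvectorBasis i⟩
    intro h
    have hne := hG.eigenvectorBasis.orthonormal.ne_zero i
    apply hne
    ext j
    exact congrFun h j

/-- The resolvent-type matrix `1 - λ (G + ε)⁻¹ G` is diagonalised together with `G`. -/
lemma diagonalization_resolvent {n : ℕ} {G U : Matrix (Fin n) (Fin n) ℝ} {d : Fin n → ℝ}
    (hU : U * Uᵀ = 1) (hU' : Uᵀ * U = 1) (hG : G = U * diagonal d * Uᵀ) {ε : ℝ}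
    (hd : ∀ i, d i + ε ≠ 0) (lam : ℝ) :
    1 - lam • ((G + ε • (1 : Matrix (Fin n) (Fin n) ℝ))⁻¹ * G) =
      U * diagonal (fun i => 1 - lam * (d i / (d i + ε))) * Uᵀ := by
  have hmul : ∀ f g : Fin n → ℝ, (U * diagonal f * Uᵀ) * (U * diagonal g * Uᵀ) =
      U * diagonal (fun i => f i * g i) * Uᵀ := by
    intro f g
    calc _ = U * diagonal f * (Uᵀ * U) * diagonal g * Uᵀ := by simp only [Matrix.mul_assoc]
      _ = _ := by rw [hU', Matrix.mul_one, Matrix.mul_assoc U, diagonal_mul_diagonal]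
  have hone : (1 : Matrix (Fin n) (Fin n) ℝ) = U * diagonal (fun _ => 1) * Uᵀ := by
    rw [diagonal_one, Matrix.mul_one, hU]
  have hlin : ∀ (f g : Fin n → ℝ) (c : ℝ), U * diagonal f * Uᵀ + c • (U * diagonal g * Uᵀ) =
      U * diagonal (fun i => f i + c * g i) * Uᵀ := by
    intro f g c
    have : diagonal (fun i => f i + c * g i) = diagonal f + c • diagonal g := by
      rw [← diagonal_smul, diagonal_add]; rfl
    rw [this, Matrix.mul_add, Matrix.add_mul, Matrix.mul_smul, Matrix.smul_mul]
  have hinv : (G + ε • (1 : Matrix (Fin n) (Fin n) ℝ))⁻¹ =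
      U * diagonal (fun i => (d i + ε)⁻¹) * Uᵀ := by
    apply inv_eq_right_inv
    rw [hG, hone, hlin, hmul]
    simp only [mul_one, mul_inv_cancel₀ (hd _)]
  rw [hinv, hG, hmul, sub_eq_add_neg, ← neg_smul, hone, hlin]
  congr 3
  funext i
  ring

/-- Lemma 3.2, first inequality. -/
theorem stmt_1 {m n : ℕ} (hmn : m ≤ n) (A : Matrix (Fin m) (Fin n) ℝ) (hA : A ≠ 0)
    (σ1 σm : ℝ) (hσ1 : IsMaxSingularValue A σ1) (hσm : IsMinSingularValue A σm)
    (t : ℕ) (ht : 0 < t) (δ : ℝ) (hδ : IsRIC A t δ)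
    (ε lam : ℝ) (hε : σ1 ^ 2 < ε) (hlam0 : 0 ≤ lam) (hlam : lam ≤ ε + σm ^ 2)
    (u v : Fin n → ℝ) (hsupp : (supp u ∪ supp v).ncard ≤ t) :
    |dot u (((1 : Matrix (Fin n) (Fin n) ℝ) -
        lam • ((Aᵀ * A + ε • (1 : Matrix (Fin n) (Fin n) ℝ))⁻¹ * (Aᵀ * A))).mulVec v)| ≤
      (δ + σ1 ^ 2 - lam * σ1 ^ 2 / (ε + σ1 ^ 2)) * norm2 u * norm2 v := by
  have hε0 : 0 < ε := lt_of_le_of_lt (sq_nonneg σ1) hε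
  have hherm : (Aᵀ * A).IsHermitian := by
    rw [IsHermitian, conjTranspose_eq_transpose_of_trivial, transpose_mul, transpose_transpose]
  obtain ⟨U, d, hU, hU', hG, hev⟩ := exists_diagonalization (Aᵀ * A) hherm
  have hd : ∀ i, 0 ≤ d i ∧ d i ≤ σ1 ^ 2 ∧ (d i = 0 ∨ σm ^ 2 ≤ d i) := fun i => by
    obtain ⟨w, hw, hwd⟩ := hev i
    exact eigenvalue_bounds A hσ1 hσm hw hwd
  -- As `A ≠ 0`, the matrix `AᵀA` has a nonzero eigenvalue, which separates `σₘ²` from `σ₁²`.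
  have hσ : σm ^ 2 ≤ σ1 ^ 2 := by
    by_contra hlt
    have hd0 : d = 0 := by
      funext i
      rcases (hd i).2.2 with h | h
      · exact h
      · exact absurd (h.trans (hd i).2.1) hlt
    apply hA
    rw [hd0] at hG
    have h0 : Aᵀ * A = 0 := by simpa using hG
    rw [← conjTranspose_eq_transpose_of_trivial] at h0
    exact conjTranspose_mul_self_eq_zero.mp h0
  have hM := diagonalization_resolvent hU hU' hG
    (fun i => (by linarith [(hd i).1] : 0 < d i + ε).ne') lam
  change |u ⬝ᵥ _| ≤ _
  rw [hM]
  refine polarization_bound _ (by simp [transpose_mul, Matrix.mul_assoc]) _ u v fun a b => ?_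
  set x := a • u + b • v with hx
  have hxs : (supp x).ncard ≤ t := by
    refine (Set.ncard_le_ncard ?_ (Set.toFinite _)).trans hsupp
    intro i hi
    by_contra hcon
    simp only [supp, Set.mem_union, Set.mem_ofPred_eq, not_or, not_not] at hcon
    exact hi (by simp [hx, hcon.1, hcon.2])
  obtain ⟨r1, r2⟩ := hδ.2.2 x hxs
  have hAx : norm2 (A *ᵥ x) ^ 2 = ∑ i, d i * (Uᵀ *ᵥ x) i ^ 2 := by
    rw [norm2_sq_mulVec, hG, dotProduct_conj_diagonal]
  have hnx : norm2 x ^ 2 = ∑ i, (Uᵀ *ᵥ x) i ^ 2 := by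
    have h := dotProduct_conj_diagonal U (fun _ => 1) x
    rw [diagonal_one, Matrix.mul_one, hU, one_mulVec, ← norm2_sq] at h
    simpa using h
  have hsplit : ∑ i, (1 - lam * (d i / (d i + ε))) * (Uᵀ *ᵥ x) i ^ 2 =
      (norm2 x ^ 2 - norm2 (A *ᵥ x) ^ 2) +
        ∑ i, (d i - lam * (d i / (d i + ε))) * (Uᵀ *ᵥ x) i ^ 2 := by
    rw [hAx, hnx, ← Finset.sum_sub_distrib, ← Finset.sum_add_distrib]
    exact Finset.sum_congr rfl fun i _ => by ring
  have hb := fun i => shifted_bounds hε0 hlam (hd i).1 (hd i).2.1 hσ (hd i).2.2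
  have hlow : 0 ≤ ∑ i, (d i - lam * (d i / (d i + ε))) * (Uᵀ *ᵥ x) i ^ 2 :=
    Finset.sum_nonneg fun i _ => mul_nonneg (hb i).1 (sq_nonneg _)
  have hup : ∑ i, (d i - lam * (d i / (d i + ε))) * (Uᵀ *ᵥ x) i ^ 2 ≤
      (σ1 ^ 2 - lam * σ1 ^ 2 / (ε + σ1 ^ 2)) * norm2 x ^ 2 := by
    rw [hnx, Finset.mul_sum]
    exact Finset.sum_le_sum fun i _ => mul_le_mul_of_nonneg_right (hb i).2 (sq_nonneg _)
  rw [dotProduct_conj_diagonal, hsplit, abs_le]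
  constructor <;> linarith
end

section
/- Let k ≤ n be a positive integer, let z ∈ ℝ^n be arbitrary, and let x ∈ ℝ^n be k-sparse with S = supp(x). If w ∈ ℝ^n is a hard k-thresholding of z with associated index set S*, then ‖(x − w)_{S \ S*}‖₂ ≤ √2 ‖(x − z)_{S ∪ S*}‖₂. -/
/-!
On `S \ S*` the vector `w` vanishes, so the left-hand side is the norm of `x` there, and
`x i ^ 2 ≤ 2 * ((x i - z i) ^ 2 + z i ^ 2)`. Since `|S| ≤ k = |S*|`, the set `S \ S*` has at most
as many elements as `S* \ S`, and every `|z|` on the former is at most every `|z|` on the latter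
(`sum_le_sum_of_card_le`); hence the mass of `z` on `S \ S*` is at most its mass on `S* \ S`.
There `x = 0`, so the latter is the mass of `x - z` on `S* \ S`, which is disjoint from `S \ S*`.
-/

open Matrix Filter Topology

/-- If `A` has at most as many elements as `B` and every value of the nonnegative function `a` on
`A` is at most every value on `B`, the maximum of `a` on `A` separates the two sums. -/
lemma sum_le_sum_of_card_le {ι : Type*} (A B : Finset ι) (a : ι → ℝ) (ha : ∀ i, 0 ≤ a i)
    (hcard : A.card ≤ B.card) (hab : ∀ i ∈ A, ∀ j ∈ B, a i ≤ a j) :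
    ∑ i ∈ A, a i ≤ ∑ j ∈ B, a j := by
  rcases A.eq_empty_or_nonempty with rfl | hA
  · simpa using Finset.sum_nonneg fun i _ => ha i
  · obtain ⟨m, hm, hmax⟩ := A.exists_max_image a hA
    calc ∑ i ∈ A, a i ≤ A.card • a m := Finset.sum_le_card_nsmul _ _ _ hmax
      _ ≤ B.card • a m := nsmul_le_nsmul_left (ha m) hcard
      _ ≤ ∑ j ∈ B, a j := Finset.card_nsmul_le_sum _ _ _ (hab m hm)

lemma sum_indicator_sq {n : ℕ} (T : Set (Fin n)) [Fintype T] (v : Fin n → ℝ) :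
    ∑ i, T.indicator v i ^ 2 = ∑ i ∈ T.toFinset, v i ^ 2 := by
  symm
  refine Finset.sum_subset_zero_on_sdiff (Finset.subset_univ _) (fun i hi => ?_) fun i hi => ?_
  · have : i ∉ T := by simpa using hi
    simp [this]
  · rw [Set.indicator_of_mem (Set.mem_toFinset.1 hi)]

/-- intermediate step in the proof of Lemma 3.3. -/
theorem stmt_5 {n : ℕ} (k : ℕ) (hk : 0 < k) (hkn : k ≤ n)
    (z x : Fin n → ℝ) (hx : (supp x).ncard ≤ k)
    (w : Fin n → ℝ) (Sstar : Set (Fin n))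
    (hw : IsHardThresholding k z w Sstar) :
    norm2 ((supp x \ Sstar).indicator (x - w)) ≤
      Real.sqrt 2 * norm2 ((supp x ∪ Sstar).indicator (x - z)) := by
  classical
  obtain ⟨hc, hwz, hw0, hle⟩ := hw
  unfold norm2
  rw [← Real.sqrt_mul (by norm_num), sum_indicator_sq, sum_indicator_sq]
  apply Real.sqrt_le_sqrt
  set A := (supp x \ Sstar).toFinset with hA
  set B := (Sstar \ supp x).toFinset with hB
  have hcard : A.card ≤ B.card := by
    rw [hA, hB, ← Set.ncard_eq_toFinset_card', ← Set.ncard_eq_toFinset_card']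
    have h1 := Set.ncard_inter_add_ncard_sdiff_eq_ncard (supp x) Sstar
    have h2 := Set.ncard_inter_add_ncard_sdiff_eq_ncard Sstar (supp x)
    rw [Set.inter_comm] at h2
    omega
  have hz : ∑ i ∈ A, z i ^ 2 ≤ ∑ j ∈ B, z j ^ 2 := by
    refine sum_le_sum_of_card_le A B _ (fun i => sq_nonneg _) hcard fun i hi j hj => ?_
    simp only [hA, hB, Set.mem_toFinset] at hi hj
    exact sq_le_sq.2 (hle j hj.1 i hi.2)
  have hzB : ∑ j ∈ B, z j ^ 2 = ∑ j ∈ B, (x - z) j ^ 2 := by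
    refine Finset.sum_congr rfl fun j hj => ?_
    simp only [hB, Set.mem_toFinset] at hj
    have : x j = 0 := not_not.1 hj.2
    simp [this]
  have hdisj : Disjoint A B := by
    rw [Finset.disjoint_left]
    intro i hi hj
    simp only [hA, hB, Set.mem_toFinset] at hi hj
    exact hi.2 hj.1
  have hsub : A ∪ B ⊆ (supp x ∪ Sstar).toFinset := by
    intro i hi
    simp only [hA, hB, Finset.mem_union, Set.mem_toFinset, Set.mem_sdiff, Set.mem_union] at hi ⊢
    tauto
  calc ∑ i ∈ A, (x - w) i ^ 2
      ≤ ∑ i ∈ A, 2 * ((x - z) i ^ 2 + z i ^ 2) := by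
        refine Finset.sum_le_sum fun i hi => ?_
        simp only [hA, Set.mem_toFinset] at hi
        simp only [Pi.sub_apply, hw0 i hi.2]
        nlinarith [sq_nonneg (x i - 2 * z i)]
    _ = 2 * (∑ i ∈ A, (x - z) i ^ 2 + ∑ i ∈ A, z i ^ 2) := by
        rw [← Finset.mul_sum, Finset.sum_add_distrib]
    _ ≤ 2 * (∑ i ∈ A, (x - z) i ^ 2 + ∑ j ∈ B, (x - z) j ^ 2) := by linarith
    _ = 2 * ∑ i ∈ A ∪ B, (x - z) i ^ 2 := by rw [Finset.sum_union hdisj]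
    _ ≤ 2 * ∑ i ∈ (supp x ∪ Sstar).toFinset, (x - z) i ^ 2 := by
        gcongr
end
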